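/- Let G₁ be an r₁-regular graph on n₁ vertices and m₁ edges, and G₂ an r₂-regular graph on n₂ vertices, and let α ∈ [0,1]. (1) If r₁ = 1, then the A_α-spectrum of the R-edge join G₁⟨e⟩G₂ consists precisely of: 3α − 1; the values α + λ_i(A_α(G₂)) for i = 2,…,n₂; and the three roots of F(x) = (x−α−r₂)(x² − (3α+αn₂+1)x + α²n₂ + 6α + αn₂ − 2) − n₂(1−α)²(x−α−1). (2) If r₁ ≥ 2, then the A_α-spectrum of G₁⟨e⟩G₂ consists precisely of: α(2+n₂) repeated m₁−n₁ times; αm₁ + λ_i(A_α(G₂)) for i = 2,…,n₂; the two roots of G_i(x) = x² − (2α+αr₁+αn₂+λ_i(A_α(G₁)))x + α²r₁n₂ + 3αr₁ − r₁ + (3α+αn₂−1)λ_i(A_α(G₁)) for each i = 2,…,n₁; and the three roots of F(x) = (x−αm₁−r₂)(x² − (2α+αr₁+αn₂+r₁)x + (α²r₁n₂+6αr₁+αr₁n₂−2r₁)) − m₁n₂(1−α)²(x−αr₁−r₁). -/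

import Mathlib

open Matrix Polynomial
open scoped Classical

noncomputable section

/-- `A_α(G) = α·D(G) + (1-α)·A(G)`, where `D(G)` is the diagonal degree matrix and
`A(G)` the adjacency matrix. -/
def Aalpha {V : Type*} [Fintype V] (G : SimpleGraph V) (α : ℝ) : Matrix V V ℝ :=
  α • Matrix.diagonal (fun v => (G.degree v : ℝ)) + (1 - α) • G.adjMatrix ℝ

/-- The `R`-edge join `G₁⟨e⟩G₂`: take the `R`-graph `R(G₁)` (for each edge of `G₁` a
new vertex joined to both of its endpoints) together with `G₂`, and join every inserted
vertex of `R(G₁)` with every vertex of `G₂`. -/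
def rEdgeJoin {V₁ V₂ : Type*} (G₁ : SimpleGraph V₁) (G₂ : SimpleGraph V₂) :
    SimpleGraph (V₁ ⊕ (↥G₁.edgeSet ⊕ V₂)) :=
  SimpleGraph.fromRel fun a b =>
    match a, b with
    | Sum.inl v, Sum.inl w => G₁.Adj v w
    | Sum.inl v, Sum.inr (Sum.inl e) => v ∈ (e : Sym2 V₁)
    | Sum.inr (Sum.inl _), Sum.inr (Sum.inr _) => True
    | Sum.inr (Sum.inr u), Sum.inr (Sum.inr w) => G₂.Adj u w
    | _, _ => False

/-!
Split off from `A_α(G₁⟨e⟩G₂)` the part coming from the edges between the inserted vertices and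
`V(G₂)`. What remains is block diagonal, with blocks `K` on `R(G₁)` and `α m₁ + A_α(G₂)` on `G₂`,
while the split-off part is constant on the products of the cells `V(G₁)`, `E(G₁)`, `V(G₂)`. By
regularity the span of the three cell indicators is invariant, so restoring the coupling only
changes the action on that span (Rado's perturbation theorem): in the characteristic polynomial, the
one of the uncoupled `3 × 3` quotient matrix is replaced by that of the coupled one, which is `F`.

The block of `K` on the inserted vertices is scalar, and eliminating them leaves a multiple of
`B Bᵀ = D + A`, an affine function of `A_α(G₁)` as `G₁` is regular. Hence each `λ_i(A_α(G₁))`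
contributes the quadratic `G_i`, up to a power of `X - α(2 + n₂)`. For `r₁ = 1`, `G₁` is a single
edge, so `m₁ - n₁ = -1`, and the only `G_i` left has the root `α(2 + n₂)` to compensate.
-/

section Matrix

variable {n R : Type*} [Fintype n] [DecidableEq n]

theorem det_add_mul_mul_det_of_mul_eq {m : Type*} [Fintype m] [DecidableEq m] [CommRing R]
    {A : Matrix n n R} {U : Matrix n m R} {L : Matrix m m R} (hU : A * U = U * L)
    (W : Matrix m n R) : (A + U * W).det * L.det = A.det * (L + W * U).det := by
  have hmul : fromBlocks A (-U) W 1 * fromBlocks 1 U 0 L = fromBlocks A 0 W (L + W * U) := by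
    simp [fromBlocks_multiply, hU, add_comm]
  simpa [det_fromBlocks_one₂₂, det_fromBlocks_zero₁₂, det_fromBlocks_zero₂₁]
    using congrArg det hmul

theorem charpoly_add_mul_mul_charpoly_of_mul_eq {m : Type*} [Fintype m] [DecidableEq m]
    [CommRing R] {A : Matrix n n R} {U : Matrix n m R} {L : Matrix m m R} (hU : A * U = U * L)
    (W : Matrix m n R) :
    (A + U * W).charpoly * L.charpoly = A.charpoly * (L + W * U).charpoly := by
  have hU' : A.charmatrix * U.map C = U.map C * L.charmatrix := by
    simp only [charmatrix, RingHom.mapMatrix_apply, Matrix.sub_mul, Matrix.mul_sub,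
      ← Matrix.map_mul, hU, scalar_comm (X : R[X]) (fun p => Commute.all X p)]
  have h := det_add_mul_mul_det_of_mul_eq hU' (-W.map C)
  have hA : (A + U * W).charmatrix = A.charmatrix + U.map C * -W.map C := by
    rw [charmatrix, map_add, ← sub_sub, RingHom.mapMatrix_apply _ (U * W), Matrix.map_mul,
      Matrix.mul_neg, ← sub_eq_add_neg, charmatrix]
  have hL : (L + W * U).charmatrix = L.charmatrix + -W.map C * U.map C := by
    rw [charmatrix, map_add, ← sub_sub, RingHom.mapMatrix_apply _ (W * U), Matrix.map_mul,
      Matrix.neg_mul, ← sub_eq_add_neg, charmatrix]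
  rwa [← hA, ← hL] at h

theorem det_fromBlocks_smul_one_mul_pow {m : Type*} [Fintype m] [DecidableEq m] [CommRing R]
    (A : Matrix n n R) (B : Matrix n m R) (D : Matrix m n R) (c : R) :
    (fromBlocks A B D (c • 1)).det * c ^ Fintype.card n =
      c ^ Fintype.card m * (c • A - B * D).det := by
  have hmul : fromBlocks A B D (c • 1) * fromBlocks (c • 1) 0 (-D) 1 =
      fromBlocks (c • A - B * D) B 0 (c • 1) := by
    simp [fromBlocks_multiply, sub_eq_add_neg]
  simpa [det_fromBlocks_zero₁₂, det_fromBlocks_zero₂₁, mul_comm] using congrArg det hmul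

section Split

variable {ι : Type*} [Fintype ι] {μ : ι → R}

theorem card_eq_of_charpoly_eq_prod [CommRing R] [Nontrivial R] {A : Matrix n n R}
    (hμ : A.charpoly = ∏ i, (X - C (μ i))) : Fintype.card n = Fintype.card ι := by
  rw [← A.charpoly_natDegree_eq_dim, hμ, natDegree_finsetProd_X_sub_C_eq_card, Finset.card_univ]

theorem trace_eq_sum_of_charpoly_eq_prod [CommRing R] [Nontrivial R] {A : Matrix n n R}
    (hμ : A.charpoly = ∏ i, (X - C (μ i))) : A.trace = ∑ i, μ i := by
  rw [trace_eq_neg_charpoly_nextCoeff, hμ, prod_X_sub_C_nextCoeff, neg_neg]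

theorem charpoly_smul_one_add_eq_prod [CommRing R] {A : Matrix n n R}
    (hμ : A.charpoly = ∏ i, (X - C (μ i))) (a : R) :
    (a • 1 + A).charpoly = ∏ i, (X - C (a + μ i)) := by
  have h : a • 1 + A = A - scalar n (-a) := by
    rw [map_neg, sub_neg_eq_add, add_comm, scalar_apply, smul_one_eq_diagonal]
  simp only [h, charpoly_sub_scalar, hμ, prod_comp, sub_comp, X_comp, C_comp, C_neg, C_add,
    ← sub_eq_add_neg, sub_sub]

theorem det_smul_one_sub_smul_eq_prod [Field R] {A : Matrix n n R}
    (hμ : A.charpoly = ∏ i, (X - C (μ i))) (s t : R) :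
    (s • (1 : Matrix n n R) - t • A).det = ∏ i, (s - t * μ i) := by
  have hcard := card_eq_of_charpoly_eq_prod hμ
  obtain rfl | ht := eq_or_ne t 0
  · simp [hcard]
  have hfac : s • (1 : Matrix n n R) - t • A = t • (scalar n (s / t) - A) := by
    rw [smul_sub, scalar_apply, ← smul_one_eq_diagonal, smul_smul, mul_div_cancel₀ _ ht]
  calc (s • (1 : Matrix n n R) - t • A).det
      = t ^ Fintype.card ι * ∏ i, (s / t - μ i) := by
        rw [hfac, det_smul, ← eval_charpoly, hμ, eval_prod, hcard]
        simp only [eval_sub, eval_X, eval_C]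
    _ = ∏ i, (s - t * μ i) := by
        rw [← Finset.card_univ, ← Finset.prod_const, ← Finset.prod_mul_distrib]
        exact Finset.prod_congr rfl fun i _ => by field_simp

end Split

theorem isRoot_charpoly_of_mulVec_eq_smul [Field R] {A : Matrix n n R} {v : n → R} {r : R}
    (hv : v ≠ 0) (hA : A *ᵥ v = r • v) : A.charpoly.IsRoot r := by
  rw [← charpoly_toLin', ← Module.End.hasEigenvalue_iff_isRoot_charpoly]
  exact Module.End.hasEigenvalue_of_hasEigenvector
    (Module.End.hasEigenvector_iff.mpr ⟨Module.End.mem_eigenspace_iff.mpr hA, hv⟩)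

theorem le_of_isRoot_charpoly_of_mulVec_one_eq_smul {A : Matrix n n ℝ} {r x : ℝ}
    (hA : ∀ i j, i ≠ j → 0 ≤ A i j) (hr : A *ᵥ 1 = r • 1) (hx : A.charpoly.IsRoot x) :
    x ≤ r := by
  rw [← charpoly_toLin', ← Module.End.hasEigenvalue_iff_isRoot_charpoly] at hx
  obtain ⟨i, hi⟩ := eigenvalue_mem_ball hx
  have hnorm : ∑ j ∈ Finset.univ.erase i, ‖A i j‖ = ∑ j ∈ Finset.univ.erase i, A i j :=
    Finset.sum_congr rfl fun j hj => Real.norm_of_nonneg (hA i j (Finset.ne_of_mem_erase hj).symm)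
  rw [Metric.mem_closedBall, Real.dist_eq, hnorm] at hi
  calc x ≤ A i i + ∑ j ∈ Finset.univ.erase i, A i j := by linarith [le_abs_self (x - A i i)]
    _ = ∑ j, A i j := Finset.add_sum_erase _ _ (Finset.mem_univ i)
    _ = r := by simpa [mulVec, dotProduct] using congrFun hr i

theorem eq_of_antitone_of_charpoly_eq_prod [Nonempty n] {A : Matrix n n ℝ} {r : ℝ} {k : ℕ}
    [NeZero k] {μ : Fin k → ℝ} (hA : ∀ i j, i ≠ j → 0 ≤ A i j) (hr : A *ᵥ 1 = r • 1)
    (hμ : Antitone μ) (hch : A.charpoly = ∏ i, (X - C (μ i))) : μ 0 = r := by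
  have hroot (x : ℝ) : A.charpoly.IsRoot x ↔ ∃ i, μ i = x := by
    simp [hch, IsRoot.def, eval_prod, Finset.prod_eq_zero_iff, sub_eq_zero, eq_comm (a := x)]
  obtain ⟨i, hi⟩ := (hroot r).mp (isRoot_charpoly_of_mulVec_eq_smul one_ne_zero hr)
  exact le_antisymm (le_of_isRoot_charpoly_of_mulVec_one_eq_smul hA hr ((hroot _).mpr ⟨0, rfl⟩))
    (hi ▸ hμ (Fin.zero_le i))

end Matrix

section Regular

variable {V : Type*} [Fintype V] {G : SimpleGraph V} {r : ℕ}

theorem card_mul_eq_two_mul_card_edgeSet (hG : G.IsRegularOfDegree r) :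
    Fintype.card V * r = 2 * Fintype.card G.edgeSet := by
  simpa [hG.degree_eq, SimpleGraph.edgeFinset_card] using G.sum_degrees_eq_twice_card_edges

theorem card_eq_two_and_card_edgeSet_eq_one (hconn : G.Connected) (hG : G.IsRegularOfDegree 1) :
    Fintype.card V = 2 ∧ Fintype.card G.edgeSet = 1 := by
  have hle := hconn.card_vert_le_card_edgeSet_add_one
  have hsum := card_mul_eq_two_mul_card_edgeSet hG
  have := hconn.nonempty
  have hpos := Fintype.card_pos (α := V)
  rw [Nat.card_eq_fintype_card, Nat.card_eq_fintype_card] at hle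
  lia

theorem card_le_card_edgeSet (hG : G.IsRegularOfDegree r) (hr : 2 ≤ r) :
    Fintype.card V ≤ Fintype.card G.edgeSet := by
  nlinarith [card_mul_eq_two_mul_card_edgeSet hG]

end Regular

section Incidence

variable (R : Type*) {V : Type*} (G : SimpleGraph V)

/-- The vertex-edge incidence matrix with one column per edge; Mathlib's `incMatrix` has a column
for every unordered pair of vertices. -/
def edgeIncMatrix [Zero R] [One R] : Matrix V G.edgeSet R :=
  (G.incMatrix R).submatrix id Subtype.val

theorem edgeIncMatrix_apply [MulZeroOneClass R] (v : V) (e : G.edgeSet) :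
    edgeIncMatrix R G v e = if v ∈ (e : Sym2 V) then 1 else 0 := by
  simp [edgeIncMatrix, SimpleGraph.incMatrix_apply', SimpleGraph.incidenceSet]

variable [Fintype V]

theorem sum_edgeSet_eq_sum_sym2 {M : Type*} [AddCommMonoid M] {f : Sym2 V → M}
    (hf : ∀ e ∉ G.edgeSet, f e = 0) :
    ∑ e : G.edgeSet, f e = ∑ e, f e := by
  rw [← Finset.sum_subtype G.edgeFinset (fun e => SimpleGraph.mem_edgeFinset)]
  exact Finset.sum_subset (Finset.subset_univ _) fun e _ he => hf e (by simpa using he)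

theorem sum_edgeIncMatrix_row [NonAssocSemiring R] (v : V) :
    ∑ e, edgeIncMatrix R G v e = G.degree v := by
  rw [← SimpleGraph.sum_incMatrix_apply]
  exact sum_edgeSet_eq_sum_sym2 G (f := G.incMatrix R v) fun e he =>
    G.incMatrix_of_notMem_incidenceSet fun h => he h.1

theorem sum_edgeIncMatrix_col [NonAssocSemiring R] (e : G.edgeSet) :
    ∑ v, edgeIncMatrix R G v e = 2 :=
  G.sum_incMatrix_apply_of_mem_edgeSet e.2

theorem edgeIncMatrix_mul_transpose [Semiring R] :
    edgeIncMatrix R G * (edgeIncMatrix R G)ᵀ =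
      Matrix.diagonal (fun v => (G.degree v : R)) + G.adjMatrix R := by
  have hinc : edgeIncMatrix R G * (edgeIncMatrix R G)ᵀ = G.incMatrix R * (G.incMatrix R)ᵀ := by
    ext v w
    refine sum_edgeSet_eq_sum_sym2 G (f := fun e => G.incMatrix R v e * G.incMatrix R w e) ?_
    intro e he
    rw [G.incMatrix_of_notMem_incidenceSet fun h => he h.1, zero_mul]
  rw [hinc, SimpleGraph.incMatrix_mul_transpose]
  ext v w
  obtain rfl | hvw := eq_or_ne v w
  · simp
  · simp [hvw, SimpleGraph.adjMatrix_apply]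

end Incidence

namespace Aalpha

variable {V : Type*} [Fintype V] {G : SimpleGraph V} {r : ℕ} {α : ℝ}

theorem eq_smul_one_add (hG : G.IsRegularOfDegree r) :
    Aalpha G α = (α * r) • 1 + (1 - α) • G.adjMatrix ℝ := by
  simp only [Aalpha, hG.degree_eq, ← smul_one_eq_diagonal, smul_smul]

theorem mulVec_one (hG : G.IsRegularOfDegree r) : Aalpha G α *ᵥ 1 = (r : ℝ) • 1 := by
  have hadj : G.adjMatrix ℝ *ᵥ 1 = (r : ℝ) • 1 := by
    ext v
    simpa using SimpleGraph.adjMatrix_mulVec_const_apply_of_regular (a := (1 : ℝ)) hG (v := v)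
  rw [eq_smul_one_add hG, add_mulVec, smul_mulVec, smul_mulVec, one_mulVec, hadj]
  module

theorem sum_row (hG : G.IsRegularOfDegree r) (v : V) : ∑ w, Aalpha G α v w = r := by
  simpa [mulVec, dotProduct] using congrFun (mulVec_one (α := α) hG) v

theorem apply_nonneg_of_ne (hα : α ≤ 1) (v w : V) (h : v ≠ w) : 0 ≤ Aalpha G α v w := by
  have hα' : 0 ≤ 1 - α := sub_nonneg.mpr hα
  rw [Aalpha, Matrix.add_apply, Matrix.smul_apply, Matrix.diagonal_apply_ne _ h, smul_zero,
    zero_add, Matrix.smul_apply, SimpleGraph.adjMatrix_apply]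
  split_ifs <;> simp [hα']

theorem trace_eq (hG : G.IsRegularOfDegree r) : (Aalpha G α).trace = Fintype.card V * (α * r) := by
  simp [eq_smul_one_add hG, mul_comm]

end Aalpha

namespace rEdgeJoin

variable {V₁ V₂ : Type*} (G₁ : SimpleGraph V₁) (G₂ : SimpleGraph V₂)

theorem not_eq_and_adj_or_adj_iff {V : Type*} (G : SimpleGraph V) (v w : V) :
    ¬v = w ∧ (G.Adj v w ∨ G.Adj w v) ↔ G.Adj v w := by
  rw [G.adj_comm w v, or_self, and_iff_right_of_imp G.ne_of_adj]

theorem adjMatrix_eq_fromBlocks :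
    (rEdgeJoin G₁ G₂).adjMatrix ℝ =
      fromBlocks (G₁.adjMatrix ℝ) (fromCols (edgeIncMatrix ℝ G₁) 0)
        (fromRows (edgeIncMatrix ℝ G₁)ᵀ 0)
        (fromBlocks 0 (of fun _ _ => 1) (of fun _ _ => 1) (G₂.adjMatrix ℝ)) := by
  ext (v | e | u) (w | f | z) <;> rw [SimpleGraph.adjMatrix_apply] <;>
    simp [rEdgeJoin, edgeIncMatrix_apply, not_eq_and_adj_or_adj_iff]

variable [Fintype V₁] [Fintype V₂]

/-- The block of `A_α(G⟨e⟩H)` on the vertices of the `R`-graph `R(G)`, where each inserted vertex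
has `n` further neighbours, namely the vertices of `H`. -/
def rGraphBlock (α n : ℝ) : Matrix (V₁ ⊕ G₁.edgeSet) (V₁ ⊕ G₁.edgeSet) ℝ :=
  fromBlocks (α • Matrix.diagonal (fun v => (G₁.degree v : ℝ)) + Aalpha G₁ α)
    ((1 - α) • edgeIncMatrix ℝ G₁) ((1 - α) • (edgeIncMatrix ℝ G₁)ᵀ) ((α * (2 + n)) • 1)

/-- The columns are the indicator vectors of the three cells `V₁`, `E`, `V₂`. -/
def cellIndicator (V₁ E V₂ : Type*) : Matrix ((V₁ ⊕ E) ⊕ V₂) (Fin 3) ℝ :=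
  of (Sum.elim (Sum.elim (fun _ => ![1, 0, 0]) fun _ => ![0, 1, 0]) fun _ => ![0, 0, 1])

/-- The rows of this matrix are the rows, constant on each cell, of the part of `A_α(G₁⟨e⟩G₂)` that
comes from the edges between the inserted vertices and `V₂`. -/
def couplingRows (V₁ E V₂ : Type*) (α : ℝ) : Matrix (Fin 3) ((V₁ ⊕ E) ⊕ V₂) ℝ :=
  of ![0, Sum.elim 0 fun _ => 1 - α, Sum.elim (Sum.elim 0 fun _ => 1 - α) 0]

/-- The quotient matrix of `A_α(G₁⟨e⟩G₂)` with respect to the cells `V₁`, `E`, `V₂`, with the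
entries `a`, `b` coming from the edges between the inserted vertices and `V₂` left free. -/
def quotientMatrix (α r₁ r₂ m n a b : ℝ) : Matrix (Fin 3) (Fin 3) ℝ :=
  !![α * r₁ + r₁, (1 - α) * r₁, 0; (1 - α) * 2, α * (2 + n), a; 0, b, α * m + r₂]

/-- The polynomial `G_i(x)` of the theorem for the eigenvalue `μ = λ_i(A_α(G₁))`. -/
def edgeQuadratic (α r n μ : ℝ) : ℝ[X] :=
  X ^ 2 - C (2 * α + α * r + α * n + μ) * X
    + C (α ^ 2 * r * n + 3 * α * r - r + (3 * α + α * n - 1) * μ)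

theorem degree_eq (x : V₁ ⊕ G₁.edgeSet ⊕ V₂) :
    ((rEdgeJoin G₁ G₂).degree x : ℝ) =
      Sum.elim (fun v => 2 * (G₁.degree v : ℝ)) (Sum.elim (fun _ => 2 + (Fintype.card V₂ : ℝ))
        fun u => Fintype.card G₁.edgeSet + (G₂.degree u : ℝ)) x := by
  have h : ((rEdgeJoin G₁ G₂).degree x : ℝ) = ∑ y, (rEdgeJoin G₁ G₂).adjMatrix ℝ x y := by
    simp [SimpleGraph.adjMatrix_apply, SimpleGraph.degree_eq_sum_if_adj]
  rw [h, adjMatrix_eq_fromBlocks]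
  obtain v | e | u := x <;>
    simp [Fintype.sum_sum_type, sum_edgeIncMatrix_row, sum_edgeIncMatrix_col,
      SimpleGraph.adjMatrix_apply, SimpleGraph.degree_eq_sum_if_adj, two_mul]

theorem reindex_Aalpha (α : ℝ) :
    reindex (Equiv.sumAssoc V₁ G₁.edgeSet V₂).symm (Equiv.sumAssoc V₁ G₁.edgeSet V₂).symm
        (Aalpha (rEdgeJoin G₁ G₂) α) =
      fromBlocks (rGraphBlock G₁ α (Fintype.card V₂)) 0 0
          ((α * Fintype.card G₁.edgeSet) • 1 + Aalpha G₂ α) +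
        cellIndicator V₁ G₁.edgeSet V₂ * couplingRows V₁ G₁.edgeSet V₂ α := by
  ext ((v | e) | u) ((w | f) | z) <;>
    simp [Aalpha, adjMatrix_eq_fromBlocks, degree_eq, rGraphBlock, cellIndicator, couplingRows,
      Matrix.mul_apply, Fin.sum_univ_three, Matrix.diagonal_apply, Matrix.one_apply,
      two_mul, mul_add, ite_add_zero, add_assoc]

variable {G₁ G₂} {r₁ r₂ : ℕ}

theorem fromBlocks_mul_cellIndicator (hreg₁ : G₁.IsRegularOfDegree r₁)
    (hreg₂ : G₂.IsRegularOfDegree r₂) (α m n : ℝ) :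
    fromBlocks (rGraphBlock G₁ α n) 0 0 ((α * m) • 1 + Aalpha G₂ α) *
        cellIndicator V₁ G₁.edgeSet V₂ =
      cellIndicator V₁ G₁.edgeSet V₂ * quotientMatrix α r₁ r₂ m n 0 0 := by
  ext ((v | e) | u) j <;> fin_cases j <;>
    simp [rGraphBlock, cellIndicator, quotientMatrix, Matrix.mul_apply, Fin.sum_univ_three,
      Finset.sum_add_distrib, ← Finset.mul_sum, Aalpha.sum_row hreg₁, Aalpha.sum_row hreg₂,
      sum_edgeIncMatrix_row, sum_edgeIncMatrix_col, hreg₁.degree_eq, Matrix.diagonal_apply,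
      Matrix.one_apply]

theorem quotientMatrix_add_couplingRows_mul_cellIndicator (E : Type*) [Fintype E]
    (α r₁ r₂ m n : ℝ) :
    quotientMatrix α r₁ r₂ m n 0 0 + couplingRows V₁ E V₂ α * cellIndicator V₁ E V₂ =
      quotientMatrix α r₁ r₂ m n (Fintype.card V₂ * (1 - α)) (Fintype.card E * (1 - α)) := by
  ext i j
  fin_cases i <;> fin_cases j <;>
    simp [quotientMatrix, couplingRows, cellIndicator, vecMul, dotProduct,
      Fintype.sum_sum_type, mul_one_sub]

theorem charpoly_quotientMatrix (α r₁ r₂ m n a b : ℝ) :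
    (quotientMatrix α r₁ r₂ m n a b).charpoly =
      (X - C (α * m + r₂)) * edgeQuadratic α r₁ n r₁ - C (a * b) * (X - C (α * r₁ + r₁)) := by
  rw [charpoly, det_fin_three]
  simp only [quotientMatrix, charmatrix_apply_eq, charmatrix_apply_ne, of_apply, cons_val',
    cons_val, cons_val_fin_one, ne_eq, Fin.reduceEq, not_false_eq_true, edgeQuadratic, map_add,
    map_sub, map_mul, map_pow, map_ofNat C, map_one, map_zero]
  ring

theorem charpoly_mul_charpoly_quotientMatrix (hreg₁ : G₁.IsRegularOfDegree r₁)
    (hreg₂ : G₂.IsRegularOfDegree r₂) (α : ℝ) {m n : ℕ} (hm : Fintype.card G₁.edgeSet = m)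
    (hn : Fintype.card V₂ = n) :
    (Aalpha (rEdgeJoin G₁ G₂) α).charpoly * (quotientMatrix α r₁ r₂ m n 0 0).charpoly =
      (rGraphBlock G₁ α n).charpoly * ((α * m) • 1 + Aalpha G₂ α).charpoly *
        (quotientMatrix α r₁ r₂ m n (n * (1 - α)) (m * (1 - α))).charpoly := by
  subst hm hn
  rw [← charpoly_reindex (Equiv.sumAssoc V₁ G₁.edgeSet V₂).symm, reindex_Aalpha,
    charpoly_add_mul_mul_charpoly_of_mul_eq (fromBlocks_mul_cellIndicator hreg₁ hreg₂ α _ _),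
    quotientMatrix_add_couplingRows_mul_cellIndicator, charpoly_fromBlocks_zero₁₂]

theorem charpoly_rGraphBlock_mul_pow (hreg₁ : G₁.IsRegularOfDegree r₁) {α : ℝ} {ι : Type*}
    [Fintype ι] {μ : ι → ℝ} (hμ : (Aalpha G₁ α).charpoly = ∏ i, (X - C (μ i))) (n : ℝ) :
    (rGraphBlock G₁ α n).charpoly * (X - C (α * (2 + n))) ^ Fintype.card V₁ =
      (X - C (α * (2 + n))) ^ Fintype.card G₁.edgeSet * ∏ i, edgeQuadratic α r₁ n (μ i) := by
  refine Polynomial.funext fun x => ?_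
  set b := x - α * (2 + n) with hb
  have hblock : scalar _ x - rGraphBlock G₁ α n =
      fromBlocks ((x - α * r₁) • 1 - Aalpha G₁ α) (-((1 - α) • edgeIncMatrix ℝ G₁))
        (-((1 - α) • (edgeIncMatrix ℝ G₁)ᵀ)) (b • 1) := by
    ext (v | e) (w | f) <;>
      simp [rGraphBlock, hreg₁.degree_eq, Matrix.diagonal_apply, Matrix.one_apply, hb,
        sub_add_eq_sub_sub, ite_sub_ite]
  have hSchur : b • ((x - α * r₁) • 1 - Aalpha G₁ α) -
        -((1 - α) • edgeIncMatrix ℝ G₁) * -((1 - α) • (edgeIncMatrix ℝ G₁)ᵀ) =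
      (b * (x - α * r₁) - (1 - α) * (1 - 2 * α) * r₁) • 1 - (b + (1 - α)) • Aalpha G₁ α := by
    simp only [Matrix.neg_mul, Matrix.mul_neg, Matrix.smul_mul, Matrix.mul_smul,
      edgeIncMatrix_mul_transpose, hreg₁.degree_eq, Aalpha.eq_smul_one_add hreg₁,
      ← smul_one_eq_diagonal]
    module
  have hquad (i : ι) : (edgeQuadratic α r₁ n (μ i)).eval x =
      b * (x - α * r₁) - (1 - α) * (1 - 2 * α) * r₁ - (b + (1 - α)) * μ i := by
    simp only [edgeQuadratic, eval_add, eval_sub, eval_mul, eval_pow, eval_X, eval_C, hb]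
    ring
  have hdet := det_fromBlocks_smul_one_mul_pow ((x - α * r₁) • 1 - Aalpha G₁ α)
    (-((1 - α) • edgeIncMatrix ℝ G₁)) (-((1 - α) • (edgeIncMatrix ℝ G₁)ᵀ)) b
  rw [← hblock, hSchur, det_smul_one_sub_smul_eq_prod hμ] at hdet
  simpa only [eval_mul, eval_pow, eval_prod, eval_sub, eval_X, eval_C, eval_charpoly, hquad, ← hb]
    using hdet

theorem charpoly_mul_pow {α : ℝ} (hreg₁ : G₁.IsRegularOfDegree r₁)
    (hreg₂ : G₂.IsRegularOfDegree r₂) {ι₁ ι₂ : Type*} [Fintype ι₁] [Fintype ι₂]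
    [DecidableEq ι₁] [DecidableEq ι₂] {μ₁ : ι₁ → ℝ} {μ₂ : ι₂ → ℝ}
    (hμ₁ : (Aalpha G₁ α).charpoly = ∏ i, (X - C (μ₁ i)))
    (hμ₂ : (Aalpha G₂ α).charpoly = ∏ i, (X - C (μ₂ i)))
    {i₁ : ι₁} {i₂ : ι₂} (hi₁ : μ₁ i₁ = r₁) (hi₂ : μ₂ i₂ = r₂)
    {m n : ℕ} (hm : Fintype.card G₁.edgeSet = m) (hn : Fintype.card V₂ = n) :
    (Aalpha (rEdgeJoin G₁ G₂) α).charpoly * (X - C (α * (2 + n))) ^ Fintype.card V₁ =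
      (X - C (α * (2 + n))) ^ m * (∏ i ∈ Finset.univ.erase i₂, (X - C (α * m + μ₂ i))) *
        (∏ i ∈ Finset.univ.erase i₁, edgeQuadratic α r₁ n (μ₁ i)) *
        (quotientMatrix α r₁ r₂ m n (n * (1 - α)) (m * (1 - α))).charpoly := by
  have hQ₀ : (quotientMatrix α r₁ r₂ m n 0 0).charpoly =
      (X - C (α * m + r₂)) * edgeQuadratic α r₁ n r₁ := by
    simp [charpoly_quotientMatrix]
  have hK := charpoly_rGraphBlock_mul_pow hreg₁ hμ₁ n
  have hL := charpoly_smul_one_add_eq_prod hμ₂ (α * m)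
  rw [← Finset.mul_prod_erase _ _ (Finset.mem_univ i₁), hi₁, hm] at hK
  rw [← Finset.mul_prod_erase _ _ (Finset.mem_univ i₂), hi₂] at hL
  refine mul_right_cancel₀ (charpoly_monic (quotientMatrix α r₁ r₂ m n 0 0)).ne_zero ?_
  rw [mul_right_comm, charpoly_mul_charpoly_quotientMatrix hreg₁ hreg₂ α hm hn, hL, hQ₀]
  linear_combination (X - C (α * m + (r₂ : ℝ))) *
    (∏ i ∈ Finset.univ.erase i₂, (X - C (α * m + μ₂ i))) *
    (quotientMatrix α r₁ r₂ m n (n * (1 - α)) (m * (1 - α))).charpoly * hK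

theorem edgeQuadratic_one (α n : ℝ) :
    edgeQuadratic α 1 n (2 * α - 1) = (X - C (3 * α - 1)) * (X - C (α * (2 + n))) := by
  simp only [edgeQuadratic, map_add, map_sub, map_mul, map_pow, map_one, map_ofNat C]
  ring

theorem charpoly_of_one_regular {α : ℝ} (hconn₁ : G₁.Connected) (hreg₁ : G₁.IsRegularOfDegree 1)
    (hreg₂ : G₂.IsRegularOfDegree r₂) {ι₁ ι₂ : Type*} [Fintype ι₁] [Fintype ι₂] [DecidableEq ι₂]
    {μ₁ : ι₁ → ℝ} {μ₂ : ι₂ → ℝ}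
    (hμ₁ : (Aalpha G₁ α).charpoly = ∏ i, (X - C (μ₁ i)))
    (hμ₂ : (Aalpha G₂ α).charpoly = ∏ i, (X - C (μ₂ i)))
    {i₁ : ι₁} {i₂ : ι₂} (hi₁ : μ₁ i₁ = 1) (hi₂ : μ₂ i₂ = r₂) {n : ℕ} (hn : Fintype.card V₂ = n) :
    (Aalpha (rEdgeJoin G₁ G₂) α).charpoly =
      (X - C (3 * α - 1)) * (∏ i ∈ Finset.univ.erase i₂, (X - C (α + μ₂ i))) *
        (quotientMatrix α 1 r₂ 1 n (n * (1 - α)) (1 - α)).charpoly := by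
  obtain ⟨hV, hE⟩ := card_eq_two_and_card_edgeSet_eq_one hconn₁ hreg₁
  have hcard : Fintype.card ι₁ = 2 := (card_eq_of_charpoly_eq_prod hμ₁).symm.trans hV
  obtain ⟨j, hj⟩ : ∃ j, Finset.univ.erase i₁ = {j} := by
    rw [← Finset.card_eq_one, Finset.card_erase_of_mem (Finset.mem_univ _), Finset.card_univ, hcard]
  have hμj : μ₁ j = 2 * α - 1 := by
    have htrace := trace_eq_sum_of_charpoly_eq_prod hμ₁
    rw [Aalpha.trace_eq hreg₁, hV, ← Finset.add_sum_erase _ _ (Finset.mem_univ i₁), hi₁, hj,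
      Finset.sum_singleton] at htrace
    push_cast at htrace
    linarith
  have h := charpoly_mul_pow hreg₁ hreg₂ hμ₁ hμ₂ (by rw [hi₁, Nat.cast_one]) hi₂ hE hn
  rw [hV, hj, Finset.prod_singleton, hμj, Nat.cast_one, edgeQuadratic_one, mul_one, one_mul] at h
  refine mul_right_cancel₀ (pow_ne_zero 2 (X_sub_C_ne_zero (α * (2 + (n : ℝ))))) (h.trans ?_)
  ring

theorem charpoly_of_card_le_card_edgeSet {α : ℝ} (hreg₁ : G₁.IsRegularOfDegree r₁)
    (hreg₂ : G₂.IsRegularOfDegree r₂) {ι₁ ι₂ : Type*} [Fintype ι₁] [Fintype ι₂]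
    [DecidableEq ι₁] [DecidableEq ι₂] {μ₁ : ι₁ → ℝ} {μ₂ : ι₂ → ℝ}
    (hμ₁ : (Aalpha G₁ α).charpoly = ∏ i, (X - C (μ₁ i)))
    (hμ₂ : (Aalpha G₂ α).charpoly = ∏ i, (X - C (μ₂ i)))
    {i₁ : ι₁} {i₂ : ι₂} (hi₁ : μ₁ i₁ = r₁) (hi₂ : μ₂ i₂ = r₂)
    {m n : ℕ} (hm : Fintype.card G₁.edgeSet = m) (hn : Fintype.card V₂ = n)
    (hle : Fintype.card V₁ ≤ m) :
    (Aalpha (rEdgeJoin G₁ G₂) α).charpoly =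
      (X - C (α * (2 + n))) ^ (m - Fintype.card V₁) *
        (∏ i ∈ Finset.univ.erase i₂, (X - C (α * m + μ₂ i))) *
        (∏ i ∈ Finset.univ.erase i₁, edgeQuadratic α r₁ n (μ₁ i)) *
        (quotientMatrix α r₁ r₂ m n (n * (1 - α)) (m * (1 - α))).charpoly := by
  refine mul_right_cancel₀ (pow_ne_zero (Fintype.card V₁)
    (X_sub_C_ne_zero (α * (2 + (n : ℝ))))) ?_
  rw [charpoly_mul_pow hreg₁ hreg₂ hμ₁ hμ₂ hi₁ hi₂ hm hn, ← pow_sub_mul_pow _ hle]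
  ring

end rEdgeJoin

theorem Aalpha_spectrum_rEdgeJoin_regular_general
    {V₁ V₂ : Type*} [Fintype V₁] [Fintype V₂] [DecidableEq V₁] [DecidableEq V₂]
    [Nonempty V₁] [Nonempty V₂] {n₁ m₁ n₂ r₁ r₂ : ℕ}
    (G₁ : SimpleGraph V₁) (G₂ : SimpleGraph V₂)
    (hreg₁ : G₁.IsRegularOfDegree r₁) (hreg₂ : G₂.IsRegularOfDegree r₂)
    (hm : Fintype.card G₁.edgeSet = m₁) (α : ℝ) (hα : α ≤ 1)
    (μ₁ : Fin n₁ → ℝ) (hμ₁ : Antitone μ₁)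
    (hμ₁ch : (Aalpha G₁ α).charpoly = ∏ i, (X - C (μ₁ i)))
    (μ₂ : Fin n₂ → ℝ) (hμ₂ : Antitone μ₂)
    (hμ₂ch : (Aalpha G₂ α).charpoly = ∏ i, (X - C (μ₂ i))) :
    (r₁ = 1 → G₁.Connected →
      (Aalpha (rEdgeJoin G₁ G₂) α).charpoly =
        (X - C (3 * α - 1)) *
        (∏ i ∈ Finset.univ.filter (fun i : Fin n₂ => i.val ≠ 0),
          (X - C (α + μ₂ i))) *
        ((X - C (α + r₂)) *
            (X ^ 2 - C (3 * α + α * n₂ + 1) * X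
              + C (α ^ 2 * n₂ + 6 * α + α * n₂ - 2))
          - C (n₂ * (1 - α) ^ 2) * (X - C (α + 1)))) ∧
    (2 ≤ r₁ →
      (Aalpha (rEdgeJoin G₁ G₂) α).charpoly =
        (X - C (α * (2 + n₂))) ^ (m₁ - n₁) *
        (∏ i ∈ Finset.univ.filter (fun i : Fin n₂ => i.val ≠ 0),
          (X - C (α * m₁ + μ₂ i))) *
        (∏ i ∈ Finset.univ.filter (fun i : Fin n₁ => i.val ≠ 0),
          (X ^ 2 - C (2 * α + α * r₁ + α * n₂ + μ₁ i) * X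
            + C (α ^ 2 * r₁ * n₂ + 3 * α * r₁ - r₁ + (3 * α + α * n₂ - 1) * μ₁ i))) *
        ((X - C (α * m₁ + r₂)) *
            (X ^ 2 - C (2 * α + α * r₁ + α * n₂ + r₁) * X
              + C (α ^ 2 * r₁ * n₂ + 6 * α * r₁ + α * r₁ * n₂ - 2 * r₁))
          - C (m₁ * n₂ * (1 - α) ^ 2) * (X - C (α * r₁ + r₁)))) := by
  obtain rfl : ‹DecidableEq V₁› = fun _ _ => Classical.propDecidable _ := Subsingleton.elim _ _
  obtain rfl : ‹DecidableEq V₂› = fun _ _ => Classical.propDecidable _ := Subsingleton.elim _ _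
  have hV₁ : Fintype.card V₁ = n₁ := by simpa using card_eq_of_charpoly_eq_prod hμ₁ch
  have hV₂ : Fintype.card V₂ = n₂ := by simpa using card_eq_of_charpoly_eq_prod hμ₂ch
  have : NeZero n₁ := ⟨hV₁ ▸ Fintype.card_ne_zero⟩
  have : NeZero n₂ := ⟨hV₂ ▸ Fintype.card_ne_zero⟩
  have hr₁ : μ₁ 0 = r₁ := eq_of_antitone_of_charpoly_eq_prod
    (Aalpha.apply_nonneg_of_ne hα) (Aalpha.mulVec_one hreg₁) hμ₁ hμ₁ch
  have hr₂ : μ₂ 0 = r₂ := eq_of_antitone_of_charpoly_eq_prod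
    (Aalpha.apply_nonneg_of_ne hα) (Aalpha.mulVec_one hreg₂) hμ₂ hμ₂ch
  have hfilter (n : ℕ) [NeZero n] :
      Finset.univ.filter (fun i : Fin n => i.val ≠ 0) = Finset.univ.erase 0 := by
    ext i; simp
  rw [hfilter, hfilter]
  constructor
  · rintro rfl hconn₁
    rw [rEdgeJoin.charpoly_of_one_regular hconn₁ hreg₁ hreg₂ hμ₁ch hμ₂ch
        (by simpa using hr₁) hr₂ hV₂,
      rEdgeJoin.charpoly_quotientMatrix, rEdgeJoin.edgeQuadratic]
    ring_nf
  · intro hr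
    rw [rEdgeJoin.charpoly_of_card_le_card_edgeSet hreg₁ hreg₂ hμ₁ch hμ₂ch hr₁ hr₂ hm hV₂
        (hm ▸ card_le_card_edgeSet hreg₁ hr),
      rEdgeJoin.charpoly_quotientMatrix, hV₁]
    simp only [rEdgeJoin.edgeQuadratic]
    ring_nf

/-- Corollary: the `A_α`-spectrum (as the factorization of the `A_α`-characteristic
polynomial) of the `R`-edge join `G₁⟨e⟩G₂` of an `r₁`-regular graph `G₁` and an
`r₂`-regular graph `G₂`, in the cases `r₁ = 1` and `r₁ ≥ 2`. -/
theorem Aalpha_spectrum_rEdgeJoin_regular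
    {n₁ m₁ n₂ r₁ r₂ : ℕ} (G₁ : SimpleGraph (Fin n₁)) (G₂ : SimpleGraph (Fin n₂))
    (hconn₁ : G₁.Connected) (hconn₂ : G₂.Connected)
    (hreg₁ : G₁.IsRegularOfDegree r₁) (hreg₂ : G₂.IsRegularOfDegree r₂)
    (hm : Fintype.card G₁.edgeSet = m₁)
    (α : ℝ) (hα : α ∈ Set.Icc (0 : ℝ) 1)
    (μ₁ : Fin n₁ → ℝ) (hμ₁ : Antitone μ₁)
    (hμ₁ch : (Aalpha G₁ α).charpoly = ∏ i, (X - C (μ₁ i)))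
    (μ₂ : Fin n₂ → ℝ) (hμ₂ : Antitone μ₂)
    (hμ₂ch : (Aalpha G₂ α).charpoly = ∏ i, (X - C (μ₂ i))) :
    (r₁ = 1 →
      (Aalpha (rEdgeJoin G₁ G₂) α).charpoly =
        (X - C (3 * α - 1)) *
        (∏ i ∈ Finset.univ.filter (fun i : Fin n₂ => i.val ≠ 0),
          (X - C (α + μ₂ i))) *
        ((X - C (α + r₂)) *
            (X ^ 2 - C (3 * α + α * n₂ + 1) * X
              + C (α ^ 2 * n₂ + 6 * α + α * n₂ - 2))
          - C (n₂ * (1 - α) ^ 2) * (X - C (α + 1)))) ∧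
    (2 ≤ r₁ →
      (Aalpha (rEdgeJoin G₁ G₂) α).charpoly =
        (X - C (α * (2 + n₂))) ^ (m₁ - n₁) *
        (∏ i ∈ Finset.univ.filter (fun i : Fin n₂ => i.val ≠ 0),
          (X - C (α * m₁ + μ₂ i))) *
        (∏ i ∈ Finset.univ.filter (fun i : Fin n₁ => i.val ≠ 0),
          (X ^ 2 - C (2 * α + α * r₁ + α * n₂ + μ₁ i) * X
            + C (α ^ 2 * r₁ * n₂ + 3 * α * r₁ - r₁ + (3 * α + α * n₂ - 1) * μ₁ i))) *
        ((X - C (α * m₁ + r₂)) *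
            (X ^ 2 - C (2 * α + α * r₁ + α * n₂ + r₁) * X
              + C (α ^ 2 * r₁ * n₂ + 6 * α * r₁ + α * r₁ * n₂ - 2 * r₁))
          - C (m₁ * n₂ * (1 - α) ^ 2) * (X - C (α * r₁ + r₁)))) := by
  have := hconn₁.nonempty
  have := hconn₂.nonempty
  exact (Aalpha_spectrum_rEdgeJoin_regular_general G₁ G₂ hreg₁ hreg₂ hm α hα.2
    μ₁ hμ₁ hμ₁ch μ₂ hμ₂ hμ₂ch).imp_left fun h hr => h hr hconn₁
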